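/- arXiv:1906.06930 — 5 statements merged into one kernel-verified Lean document; each statement's English description precedes it below -/
import Mathlib

section
/- For every 0 ≤ t < T, x ∈ ℝ and y > 0, the function Γ² BS := (∂²_{xx} − ∂_x)² BS applied to the Black–Scholes call price has the closed form Γ² BS(t,x,y) = (e^x / (y √(2π τ))) · exp(−d₊²/2) · (d₊² − y d₊ √τ − 1)/(y² τ), where τ = T − t and d₊ = (x − log K + (r + y²/2)τ)/(y√τ). -/
open Real MeasureTheory

/-- Standard normal cumulative distribution function. -/
noncomputable def stdNormalCDF (x : ℝ) : ℝ :=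
  ∫ t in Set.Iic x, (Real.sqrt (2 * Real.pi))⁻¹ * Real.exp (-t ^ 2 / 2)

/-- d₊ in the Black–Scholes formula. -/
noncomputable def dPlus (T K r t x y : ℝ) : ℝ :=
  (x - Real.log K + (r + y ^ 2 / 2) * (T - t)) / (y * Real.sqrt (T - t))

/-- d₋ in the Black–Scholes formula. -/
noncomputable def dMinus (T K r t x y : ℝ) : ℝ :=
  (x - Real.log K + (r - y ^ 2 / 2) * (T - t)) / (y * Real.sqrt (T - t))

/-- Black–Scholes call price with maturity `T`, strike `K`, interest rate `r`,
current time `t`, log spot price `x` and volatility `y`. -/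
noncomputable def BS (T K r t x y : ℝ) : ℝ :=
  Real.exp x * stdNormalCDF (dPlus T K r t x y)
    - K * Real.exp (-r * (T - t)) * stdNormalCDF (dMinus T K r t x y)

/-- The operator Γ := ∂²ₓₓ − ∂ₓ acting on functions of the log spot price. -/
noncomputable def GammaOp (f : ℝ → ℝ) : ℝ → ℝ :=
  fun x => deriv (deriv f) x - deriv f x

/-!
In the variable `x` we have `Γ = ∂ (∂ - 1)`, and `∂ - 1` sends `eˣ f` to `eˣ f'`, so
`Γ (eˣ f) = eˣ (f' + f'')`. Writing `φ` for the standard normal density and `σ = y √τ`, one has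
`d₋ = d₊ - σ` and hence `K e^{-rτ} φ(d₋) = eˣ φ(d₊)`. The two density terms in `∂ₓ BS` therefore
cancel, leaving `∂ₓ BS = eˣ Φ(d₊)` and `Γ BS = eˣ φ(d₊) / σ`. As `d₊` is affine in `x` with slope
`1 / σ`, the second application of `Γ` follows from `φ'(d) = -d φ(d)`.
-/

open ProbabilityTheory Topology
open scoped NNReal

theorem hasDerivAt_setIntegral_Iic {E : Type*} [NormedAddCommGroup E] [NormedSpace ℝ E]
    [CompleteSpace E] {f : ℝ → E} {x : ℝ} (hf : Integrable f) (hfx : ContinuousAt f x) :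
    HasDerivAt (fun z => ∫ s in Set.Iic z, f s) (f x) x := by
  have hsplit : (fun z => ∫ s in Set.Iic z, f s) =
      fun z => (∫ s in Set.Iic (0 : ℝ), f s) + ∫ s in (0 : ℝ)..z, f s := by
    funext z
    rw [← intervalIntegral.integral_Iic_sub_Iic hf.integrableOn hf.integrableOn,
      add_sub_cancel]
  rw [hsplit]
  exact (intervalIntegral.integral_hasDerivAt_right hf.intervalIntegrable
    hf.aestronglyMeasurable.stronglyMeasurableAtFilter hfx).const_add _

theorem hasDerivAt_gaussianPDFReal (μ : ℝ) (v : ℝ≥0) (x : ℝ) :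
    HasDerivAt (gaussianPDFReal μ v) (-((x - μ) / v) * gaussianPDFReal μ v x) x := by
  have hexponent : HasDerivAt (fun z => -(z - μ) ^ 2 / (2 * v)) (-((x - μ) / v)) x := by
    refine (((((hasDerivAt_id x).sub_const μ).pow 2).neg).div_const (2 * v : ℝ)).congr_deriv ?_
    simp only [id_eq]
    ring
  refine (hexponent.exp.const_mul (√(2 * π * v))⁻¹).congr_deriv ?_
  rw [gaussianPDFReal]
  ring

theorem gaussianPDFReal_sub_eq_mul_exp (μ : ℝ) (v : ℝ≥0) (x a : ℝ) :
    gaussianPDFReal μ v (x - a) =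
      gaussianPDFReal μ v x * exp ((a * (x - μ) - a ^ 2 / 2) / v) := by
  rw [gaussianPDFReal, gaussianPDFReal, mul_assoc (√_)⁻¹, ← exp_add]
  ring_nf

theorem stdNormalCDF_eq_setIntegral_gaussianPDFReal (x : ℝ) :
    stdNormalCDF x = ∫ s in Set.Iic x, gaussianPDFReal 0 1 s := by
  simp [stdNormalCDF, gaussianPDFReal]

theorem hasDerivAt_stdNormalCDF (x : ℝ) :
    HasDerivAt stdNormalCDF (gaussianPDFReal 0 1 x) x := by
  rw [funext stdNormalCDF_eq_setIntegral_gaussianPDFReal]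
  exact hasDerivAt_setIntegral_Iic (integrable_gaussianPDFReal 0 1)
    (hasDerivAt_gaussianPDFReal 0 1 x).continuousAt

theorem gammaOp_const_mul (a : ℝ) (f : ℝ → ℝ) :
    GammaOp (fun z => a * f z) = fun z => a * GammaOp f z := by
  funext z
  simp only [GammaOp, deriv_const_mul_field', mul_sub]

theorem gammaOp_exp_mul {f f' : ℝ → ℝ} {f'' x : ℝ}
    (hf : ∀ᶠ z in 𝓝 x, HasDerivAt f (f' z) z) (hf' : HasDerivAt f' f'' x) :
    GammaOp (fun z => exp z * f z) x = exp x * (f' x + f'') := by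
  have hderiv : deriv (fun z => exp z * f z) =ᶠ[𝓝 x] fun z => exp z * f z + exp z * f' z :=
    hf.mono fun z hz => ((Real.hasDerivAt_exp z).mul hz).deriv
  have hderiv₂ : HasDerivAt (fun z => exp z * f z + exp z * f' z)
      (exp x * f x + exp x * f' x + (exp x * f' x + exp x * f'')) x :=
    ((Real.hasDerivAt_exp x).mul hf.self_of_nhds).add ((Real.hasDerivAt_exp x).mul hf')
  rw [GammaOp, hderiv.deriv_eq, hderiv.eq_of_nhds, hderiv₂.deriv]
  ring

theorem gammaOp_exp_mul_gaussianPDFReal_comp {d : ℝ → ℝ} {c : ℝ}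
    (hd : ∀ z, HasDerivAt d c z) (x : ℝ) :
    GammaOp (fun z => exp z * gaussianPDFReal 0 1 (d z)) x =
      exp x * (gaussianPDFReal 0 1 (d x) * (c ^ 2 * (d x ^ 2 - 1) - c * d x)) := by
  have hpdf (z : ℝ) : HasDerivAt (fun w => gaussianPDFReal 0 1 (d w))
      (-c * (d z * gaussianPDFReal 0 1 (d z))) z := by
    refine ((hasDerivAt_gaussianPDFReal 0 1 (d z)).comp z (hd z)).congr_deriv ?_
    simp only [NNReal.coe_one, sub_zero, div_one]
    ring
  rw [gammaOp_exp_mul (.of_forall hpdf) (((hd x).mul (hpdf x)).const_mul (-c))]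
  ring

section BlackScholes

variable {T K r t y : ℝ}

theorem hasDerivAt_dPlus (x : ℝ) :
    HasDerivAt (fun z => dPlus T K r t z y) (y * √(T - t))⁻¹ x := by
  rw [← one_div]
  exact (((hasDerivAt_id x).sub_const _).add_const _).div_const _

theorem dMinus_eq_dPlus_sub (htT : t < T) (hy : y ≠ 0) (x : ℝ) :
    dMinus T K r t x y = dPlus T K r t x y - y * √(T - t) := by
  have hτ : 0 < T - t := sub_pos.2 htT
  rw [dMinus, dPlus, div_sub' (by positivity)]
  congr 1
  linear_combination y ^ 2 * sq_sqrt hτ.le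

theorem mul_exp_mul_gaussianPDFReal_dMinus (hK : 0 < K) (htT : t < T) (hy : y ≠ 0) (x : ℝ) :
    K * exp (-r * (T - t)) * gaussianPDFReal 0 1 (dMinus T K r t x y) =
      exp x * gaussianPDFReal 0 1 (dPlus T K r t x y) := by
  have hτ : 0 < T - t := sub_pos.2 htT
  have hd : y * √(T - t) * dPlus T K r t x y = x - log K + (r + y ^ 2 / 2) * (T - t) :=
    mul_div_cancel₀ _ (by positivity)
  have hexp : K * exp (-r * (T - t)) *
      exp (y * √(T - t) * dPlus T K r t x y - (y * √(T - t)) ^ 2 / 2) = exp x := by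
    rw [hd, mul_pow, sq_sqrt hτ.le]
    nth_rw 1 [← exp_log hK]
    rw [← exp_add, ← exp_add]
    ring_nf
  rw [dMinus_eq_dPlus_sub htT hy, gaussianPDFReal_sub_eq_mul_exp, NNReal.coe_one, div_one,
    sub_zero, ← hexp]
  ring

theorem hasDerivAt_exp_mul_stdNormalCDF_dPlus (x : ℝ) :
    HasDerivAt (fun z => exp z * stdNormalCDF (dPlus T K r t z y))
      (exp x * stdNormalCDF (dPlus T K r t x y) +
        exp x * (gaussianPDFReal 0 1 (dPlus T K r t x y) * (y * √(T - t))⁻¹)) x :=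
  (Real.hasDerivAt_exp x).mul ((hasDerivAt_stdNormalCDF _).comp x (hasDerivAt_dPlus x))

theorem hasDerivAt_BS (hK : 0 < K) (htT : t < T) (hy : y ≠ 0) (x : ℝ) :
    HasDerivAt (fun z => BS T K r t z y) (exp x * stdNormalCDF (dPlus T K r t x y)) x := by
  have hdMinus : HasDerivAt (fun z => dMinus T K r t z y) (y * √(T - t))⁻¹ x := by
    simpa only [dMinus_eq_dPlus_sub htT hy] using (hasDerivAt_dPlus x).sub_const (y * √(T - t))
  have hbond := ((hasDerivAt_stdNormalCDF _).comp x hdMinus).const_mul (K * exp (-r * (T - t)))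
  refine (hasDerivAt_exp_mul_stdNormalCDF_dPlus x |>.sub hbond).congr_deriv ?_
  linear_combination
    -(y * √(T - t))⁻¹ * mul_exp_mul_gaussianPDFReal_dMinus (r := r) hK htT hy x

theorem gammaOp_BS (hK : 0 < K) (htT : t < T) (hy : y ≠ 0) :
    GammaOp (fun z => BS T K r t z y) =
      fun z => (y * √(T - t))⁻¹ * (exp z * gaussianPDFReal 0 1 (dPlus T K r t z y)) := by
  have hdelta : deriv (fun z => BS T K r t z y) =
      fun z => exp z * stdNormalCDF (dPlus T K r t z y) :=
    funext fun z => (hasDerivAt_BS hK htT hy z).deriv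
  funext z
  rw [GammaOp, hdelta, (hasDerivAt_exp_mul_stdNormalCDF_dPlus z).deriv]
  ring

theorem gammaOp_gammaOp_BS (hK : 0 < K) (htT : t < T) (hy : y ≠ 0) (x : ℝ) :
    GammaOp (GammaOp (fun z => BS T K r t z y)) x =
      exp x / (y * √(T - t)) * gaussianPDFReal 0 1 (dPlus T K r t x y) *
        ((dPlus T K r t x y ^ 2 - y * √(T - t) * dPlus T K r t x y - 1) /
          (y * √(T - t)) ^ 2) := by
  have hτ : 0 < T - t := sub_pos.2 htT
  rw [gammaOp_BS hK htT hy, gammaOp_const_mul]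
  beta_reduce
  rw [gammaOp_exp_mul_gaussianPDFReal_comp hasDerivAt_dPlus]
  field_simp
  ring

end BlackScholes

/-- Closed form for Γ² BS = (∂²ₓₓ − ∂ₓ)² BS. -/
theorem gamma_sq_bs (T K r : ℝ) (hT : 0 < T) (hK : 0 < K)
    (t x y : ℝ) (ht0 : 0 ≤ t) (htT : t < T) (hy : 0 < y) :
    GammaOp (GammaOp (fun x' => BS T K r t x' y)) x
      = Real.exp x / (y * Real.sqrt (2 * Real.pi * (T - t)))
          * Real.exp (-(dPlus T K r t x y) ^ 2 / 2)
          * (((dPlus T K r t x y) ^ 2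
              - y * dPlus T K r t x y * Real.sqrt (T - t) - 1)
                / (y ^ 2 * (T - t))) := by
  rw [gammaOp_gammaOp_BS hK htT hy.ne', gaussianPDFReal, mul_pow, sq_sqrt (sub_pos.2 htT).le,
    sqrt_mul two_pi_pos.le (T - t)]
  simp only [NNReal.coe_one, sub_zero, mul_one]
  ring
end

section
/- The Black–Scholes call price equals the discounted risk-neutral expectation of the call payoff under a log-normal terminal price: for every 0 ≤ t < T, x ∈ ℝ and y > 0, if Z is a standard normal random variable then e^{−rτ} · E[ ( exp(x + (r − y²/2)τ + y√τ · Z) − K )⁺ ] = BS(t,x,y), where τ = T − t and (·)⁺ denotes the positive part. -/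
open Real MeasureTheory

open ProbabilityTheory

/-! The log of the terminal price is Gaussian, `N(m, v)`. On the exercise region `log K ≤ u` the
payoff is `exp u - K`. The strike leg is a Gaussian tail. In the asset leg, the weight `exp u` is
absorbed by a change of numéraire: tilting `N(m, v)` by `exp u` yields `N(m + v, v)`, so that leg is
again a Gaussian tail, with `d₊` in place of `d₋`. -/

open scoped NNReal

section Tilting

variable {Ω : Type*} {mΩ : MeasurableSpace Ω} {μ : Measure Ω} {X : Ω → ℝ}

lemma complexMGF_tilted_mul (t : ℝ) (z : ℂ) :
    complexMGF X (μ.tilted (t * X ·)) z = complexMGF X μ (t + z) / mgf X μ t := by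
  simp only [complexMGF, integral_tilted_mul_eq_mgf, ← integral_div]
  refine integral_congr_ae (ae_of_all _ fun ω ↦ ?_)
  simp only [Complex.real_smul, add_mul, Complex.exp_add]
  push_cast
  ring

lemma setIntegral_exp_mul_eq_mgf_mul_tilted_real [SFinite μ] {t : ℝ}
    (ht : Integrable (fun ω ↦ exp (t * X ω)) μ) (s : Set Ω) :
    ∫ ω in s, exp (t * X ω) ∂μ = mgf X μ t * (μ.tilted (t * X ·)).real s := by
  rcases eq_zero_or_neZero μ with rfl | hμ
  · simp
  have hdensity : (μ.tilted (t * X ·)).real s = (∫ ω in s, exp (t * X ω) ∂μ) / mgf X μ t := by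
    simpa [integral_div] using setIntegral_tilted_mul_eq_mgf (μ := μ) (X := X) (t := t)
      (fun _ ↦ (1 : ℝ)) s
  rw [hdensity, mul_div_cancel₀ _ (mgf_pos' hμ.out ht).ne']

end Tilting

section Gaussian

variable {m : ℝ} {v : ℝ≥0}

lemma gaussianReal_tilted_mul (t : ℝ) :
    (gaussianReal m v).tilted (t * ·) = gaussianReal (m + v * t) v := by
  have := isProbabilityMeasure_tilted (integrable_exp_mul_gaussianReal (μ := m) (v := v) t)
  refine Measure.ext_of_complexMGF_id_eq (funext fun z ↦ ?_)
  calc complexMGF id ((gaussianReal m v).tilted (t * ·)) z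
      = complexMGF id (gaussianReal m v) (t + z) / mgf id (gaussianReal m v) t :=
        complexMGF_tilted_mul (X := id) t z
    _ = complexMGF id (gaussianReal (m + v * t) v) z := by
        simp only [complexMGF_id_gaussianReal, mgf_id_gaussianReal, Complex.ofReal_exp,
          ← Complex.exp_sub]
        push_cast
        ring_nf

lemma setIntegral_exp_mul_gaussianReal (t : ℝ) (s : Set ℝ) :
    ∫ u in s, exp (t * u) ∂gaussianReal m v
      = exp (m * t + v * t ^ 2 / 2) * (gaussianReal (m + v * t) v).real s := by
  rw [setIntegral_exp_mul_eq_mgf_mul_tilted_real (integrable_exp_mul_gaussianReal t),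
    mgf_fun_id_gaussianReal, gaussianReal_tilted_mul]

lemma stdNormalCDF_eq_gaussianReal_real_Iic (a : ℝ) :
    stdNormalCDF a = (gaussianReal 0 1).real (Set.Iic a) := by
  have hnonneg : 0 ≤ ∫ u in Set.Iic a, gaussianPDFReal 0 1 u :=
    integral_nonneg (gaussianPDFReal_nonneg 0 1)
  rw [measureReal_def, gaussianReal_apply_eq_integral 0 one_ne_zero, ENNReal.toReal_ofReal hnonneg]
  simp [stdNormalCDF, gaussianPDFReal]

lemma hasLaw_const_add_const_mul_gaussianReal {Ω : Type*} {mΩ : MeasurableSpace Ω}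
    {P : Measure Ω} {Z : Ω → ℝ} (hZ : HasLaw Z (gaussianReal 0 1) P) (m : ℝ) {σ : ℝ}
    (hσ : σ ^ 2 = v) : HasLaw (fun ω ↦ m + σ * Z ω) (gaussianReal m v) P := by
  have hvar : (.mk (σ ^ 2) (sq_nonneg _) : ℝ≥0) = v := NNReal.coe_injective hσ
  simpa [hvar] using gaussianReal_const_add (gaussianReal_const_mul hZ σ) m

lemma gaussianReal_real_Ici (hv : v ≠ 0) (a : ℝ) :
    (gaussianReal m v).real (Set.Ici a) = stdNormalCDF ((m - a) / √v) := by
  have hσ : 0 < √(v : ℝ) := sqrt_pos.2 (by positivity)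
  have hlaw : HasLaw (fun z ↦ m + -√v * z) (gaussianReal m v) (gaussianReal 0 1) :=
    hasLaw_const_add_const_mul_gaussianReal .id m (by simp)
  have hpreimage : (fun z ↦ m + -√v * z) ⁻¹' Set.Ici a = Set.Iic ((m - a) / √v) := by
    ext z
    simp only [Set.mem_preimage, Set.mem_Ici, Set.mem_Iic, le_div_iff₀' hσ]
    constructor <;> intro h <;> linarith
  rw [stdNormalCDF_eq_gaussianReal_real_Iic, ← hpreimage, ← hlaw.map_eq,
    map_measureReal_apply (by fun_prop) measurableSet_Ici]

end Gaussian

section CallPayoff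

variable {K : ℝ}

lemma max_exp_sub_zero_eq_indicator (hK : 0 < K) (u : ℝ) :
    max (exp u - K) 0 = (Set.Ici (log K)).indicator (fun u ↦ exp u - K) u := by
  by_cases hu : log K ≤ u
  · rw [Set.indicator_of_mem (Set.mem_Ici.2 hu),
      max_eq_left (sub_nonneg.2 ((log_le_iff_le_exp hK).1 hu))]
  · rw [Set.indicator_of_notMem (by simpa using hu),
      max_eq_right (sub_nonpos.2 ((lt_log_iff_exp_lt hK).1 (not_le.1 hu)).le)]

lemma integral_max_exp_sub_zero {ν : Measure ℝ} [IsFiniteMeasure ν] (hν : Integrable exp ν)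
    (hK : 0 < K) :
    ∫ u, max (exp u - K) 0 ∂ν
      = ∫ u in Set.Ici (log K), exp u ∂ν - K * ν.real (Set.Ici (log K)) := by
  simp only [max_exp_sub_zero_eq_indicator hK]
  rw [integral_indicator measurableSet_Ici,
    integral_sub hν.integrableOn (integrable_const K), setIntegral_const, smul_eq_mul, mul_comm K]

lemma integral_max_exp_sub_zero_gaussianReal {m : ℝ} {v : ℝ≥0} (hv : v ≠ 0) (hK : 0 < K) :
    ∫ u, max (exp u - K) 0 ∂gaussianReal m v
      = exp (m + v / 2) * stdNormalCDF ((m + v - log K) / √v)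
        - K * stdNormalCDF ((m - log K) / √v) := by
  have hexp : Integrable exp (gaussianReal m v) := by
    simpa using integrable_exp_mul_gaussianReal (μ := m) (v := v) 1
  have hexercise : ∫ u in Set.Ici (log K), exp u ∂gaussianReal m v
      = exp (m + v / 2) * (gaussianReal (m + v) v).real (Set.Ici (log K)) := by
    simpa using setIntegral_exp_mul_gaussianReal (m := m) (v := v) 1 (Set.Ici (log K))
  rw [integral_max_exp_sub_zero hexp hK, hexercise, gaussianReal_real_Ici hv,
    gaussianReal_real_Ici hv]

end CallPayoff

/-- The Black–Scholes call price is the discounted risk-neutral expectation of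
the call payoff under a log-normal terminal price. -/
theorem bs_as_expectation (T K r : ℝ) (hT : 0 < T) (hK : 0 < K)
    (t x y : ℝ) (ht0 : 0 ≤ t) (htT : t < T) (hy : 0 < y)
    {Ω : Type*} [MeasurableSpace Ω] (μ : Measure Ω) [IsProbabilityMeasure μ]
    (Z : Ω → ℝ) (hZ : Measurable Z)
    (hZlaw : Measure.map Z μ = gaussianReal 0 1) :
    Real.exp (-r * (T - t)) *
        ∫ ω, max (Real.exp (x + (r - y ^ 2 / 2) * (T - t)
            + y * Real.sqrt (T - t) * Z ω) - K) 0 ∂μ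
      = BS T K r t x y := by
  set m := x + (r - y ^ 2 / 2) * (T - t) with hm
  set v : ℝ≥0 := (y ^ 2 * (T - t)).toNNReal
  have hτ : 0 < T - t := sub_pos.2 htT
  have hv : (v : ℝ) = y ^ 2 * (T - t) := coe_toNNReal _ (by positivity)
  have hsqrt : √(v : ℝ) = y * √(T - t) := by rw [hv, sqrt_mul (sq_nonneg y), sqrt_sq hy.le]
  have hv_ne : v ≠ 0 := (toNNReal_pos.2 (by positivity)).ne'
  have hlogPrice : HasLaw (fun ω ↦ m + y * √(T - t) * Z ω) (gaussianReal m v) μ :=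
    hasLaw_const_add_const_mul_gaussianReal ⟨hZ.aemeasurable, hZlaw⟩ m
      (by rw [mul_pow, sq_sqrt hτ.le, hv])
  have hpayoff : ∫ ω, max (exp (m + y * √(T - t) * Z ω) - K) 0 ∂μ
      = ∫ u, max (exp u - K) 0 ∂gaussianReal m v :=
    hlogPrice.integral_comp (f := fun u ↦ max (exp u - K) 0) (by fun_prop)
  have hforward : exp (-r * (T - t)) * exp (m + v / 2) = exp x := by
    rw [← exp_add, hm, hv]; ring_nf
  have hdPlus : (m + v - log K) / √v = dPlus T K r t x y := by
    rw [dPlus, hsqrt, hm, hv]; ring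
  have hdMinus : (m - log K) / √v = dMinus T K r t x y := by
    rw [dMinus, hsqrt, hm]; ring
  rw [hpayoff, integral_max_exp_sub_zero_gaussianReal hv_ne hK, hdPlus, hdMinus, BS, ← hforward]
  ring
end

section
/- Gaussian mixing identity for the Black–Scholes price (the identity underlying the closed formula for G_n in the Bates log-normal jump model): for every x ∈ ℝ, v > 0, m ∈ ℝ and s > 0, the integral of BS(0, x+z, v) against the Gaussian density with mean m and variance s² equals a Black–Scholes price with shifted log-price and enlarged volatility: ∫_ℝ BS(0, x + z, v) · (1/(s√(2π))) exp(−(z−m)²/(2s²)) dz = BS(0, x + m + s²/2, √(v² + s²/T)). In particular, taking m = n μ_J and s² = n σ_J², the function G_n(0,x,v) := E[BS(0, x + J_n, v)] with J_n ∼ N(n μ_J, n σ_J²) equals BS(0, x + n μ_J + n σ_J²/2, √(v² + n σ_J²/T)). -/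
open Real MeasureTheory

open ProbabilityTheory

open scoped NNReal

/-!
The Black–Scholes price is a combination of `e^z Φ((a + z) / b)` and `Φ((a' + z) / b)`. If `Z` and
`N` are independent with `Z ∼ N(m, v)` and `N ∼ N(0, b²)`, the mean of `Φ((a + Z) / b)` is
`P(N - Z ≤ a)`, and `N - Z` is again Gaussian, with mean `-m` and variance `b² + v`. The factor
`e^z` is absorbed by the Esscher (Cameron–Martin) change of measure, which moves the mean of `Z`
from `m` to `m + v` and produces the constant `e^(m + v / 2)`.
-/

theorem cdf_conv (μ ν : Measure ℝ) [IsProbabilityMeasure μ] [IsProbabilityMeasure ν] (c : ℝ) :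
    cdf (μ ∗ ν) c = ∫ x, cdf ν (c - x) ∂μ := by
  have hind : Integrable ((Set.Iic c).indicator (1 : ℝ → ℝ)) (μ ∗ ν) :=
    (integrable_const 1).indicator measurableSet_Iic
  rw [cdf_eq_real, ← integral_indicator_one measurableSet_Iic, integral_conv hind]
  refine integral_congr_ae (.of_forall fun x => ?_)
  have hshift : (fun y => (Set.Iic c).indicator (1 : ℝ → ℝ) (x + y))
      = (Set.Iic (c - x)).indicator 1 := by
    ext y
    simp only [Set.indicator_apply, Set.mem_Iic, le_sub_iff_add_le', Pi.one_apply]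
  simp only [hshift, integral_indicator_one measurableSet_Iic, cdf_eq_real]

theorem stdNormalCDF_eq_cdf_gaussianReal : stdNormalCDF = cdf (gaussianReal 0 1) := by
  ext x
  have hnonneg : 0 ≤ ∫ t in Set.Iic x, gaussianPDFReal 0 1 t :=
    integral_nonneg fun t => gaussianPDFReal_nonneg 0 1 t
  rw [cdf_eq_real, measureReal_def, gaussianReal_apply_eq_integral 0 one_ne_zero,
    ENNReal.toReal_ofReal hnonneg]
  simp [stdNormalCDF, gaussianPDFReal]

theorem measurable_stdNormalCDF : Measurable stdNormalCDF :=
  stdNormalCDF_eq_cdf_gaussianReal ▸ (monotone_cdf _).measurable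

theorem norm_stdNormalCDF_le_one (x : ℝ) : ‖stdNormalCDF x‖ ≤ 1 := by
  rw [stdNormalCDF_eq_cdf_gaussianReal, Real.norm_of_nonneg (cdf_nonneg _ x)]
  exact cdf_le_one _ x

theorem cdf_gaussianReal (m : ℝ) {v : ℝ≥0} (hv : v ≠ 0) (c : ℝ) :
    cdf (gaussianReal m v) c = stdNormalCDF ((c - m) / √v) := by
  have hσ : 0 < √(v : ℝ) := Real.sqrt_pos.2 (NNReal.coe_pos.2 (pos_iff_ne_zero.2 hv))
  have hmap : gaussianReal m v = (gaussianReal 0 1).map (fun x => √v * x + m) := by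
    have hvar : NNReal.mk (√v ^ 2) (sq_nonneg _) = v := by
      ext
      simp [Real.sq_sqrt]
    calc gaussianReal m v = ((gaussianReal 0 1).map (√v * ·)).map (· + m) := by
          rw [gaussianReal_map_const_mul, gaussianReal_map_add_const, hvar, mul_zero, zero_add,
            mul_one]
      _ = (gaussianReal 0 1).map (fun x => √v * x + m) :=
          Measure.map_map (by fun_prop) (by fun_prop)
  rw [stdNormalCDF_eq_cdf_gaussianReal, cdf_eq_real, cdf_eq_real, hmap,
    map_measureReal_apply (by fun_prop) measurableSet_Iic]
  congr 1
  ext x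
  rw [Set.mem_preimage, Set.mem_Iic, Set.mem_Iic, le_div_iff₀ hσ, le_sub_iff_add_le, mul_comm]

theorem integral_stdNormalCDF_gaussianReal (a : ℝ) {b : ℝ} (hb : 0 < b) (m : ℝ) (v : ℝ≥0) :
    ∫ z, stdNormalCDF ((a + z) / b) ∂gaussianReal m v = stdNormalCDF ((a + m) / √(b ^ 2 + v)) := by
  set w : ℝ≥0 := b.toNNReal ^ 2 with hw
  have hw_coe : (w : ℝ) = b ^ 2 := by rw [hw, NNReal.coe_pow, Real.coe_toNNReal b hb.le]
  have hw_ne : w ≠ 0 := pow_ne_zero 2 (Real.toNNReal_pos.2 hb).ne'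
  calc ∫ z, stdNormalCDF ((a + z) / b) ∂gaussianReal m v
      = ∫ z, cdf (gaussianReal 0 w) (a - -z) ∂gaussianReal m v := by
        simp only [cdf_gaussianReal 0 hw_ne, hw_coe, Real.sqrt_sq hb.le, sub_zero, sub_neg_eq_add]
    _ = ∫ z, cdf (gaussianReal 0 w) (a - z) ∂gaussianReal (-m) v := by
        rw [← gaussianReal_map_neg, integral_map_of_stronglyMeasurable measurable_neg]
        exact ((monotone_cdf _).measurable.comp (by fun_prop)).stronglyMeasurable
    _ = cdf (gaussianReal (-m) (v + w)) a := by
        rw [← cdf_conv, gaussianReal_conv_gaussianReal, add_zero]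
    _ = stdNormalCDF ((a + m) / √(b ^ 2 + v)) := by
        rw [cdf_gaussianReal (-m) (by simp [hw_ne]), NNReal.coe_add, hw_coe,
          sub_neg_eq_add, add_comm (v : ℝ)]

theorem exp_mul_gaussianPDFReal (θ m : ℝ) (v : ℝ≥0) (x : ℝ) :
    rexp (θ * x) * gaussianPDFReal m v x
      = rexp (m * θ + v * θ ^ 2 / 2) * gaussianPDFReal (m + v * θ) v x := by
  rcases eq_or_ne v 0 with rfl | hv
  · simp
  have hexp : rexp (θ * x) * rexp (-(x - m) ^ 2 / (2 * v))
      = rexp (m * θ + v * θ ^ 2 / 2) * rexp (-(x - (m + v * θ)) ^ 2 / (2 * v)) := by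
    rw [← Real.exp_add, ← Real.exp_add]
    congr 1
    field_simp
    ring
  simp only [gaussianPDFReal]
  linear_combination (√(2 * π * v))⁻¹ * hexp

theorem integral_exp_mul_smul_gaussianReal {E : Type*} [NormedAddCommGroup E] [NormedSpace ℝ E]
    (θ m : ℝ) (v : ℝ≥0) (f : ℝ → E) :
    ∫ x, rexp (θ * x) • f x ∂gaussianReal m v
      = rexp (m * θ + v * θ ^ 2 / 2) • ∫ x, f x ∂gaussianReal (m + v * θ) v := by
  rcases eq_or_ne v 0 with rfl | hv
  · by_cases hE : CompleteSpace E
    · simp [mul_comm]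
    · simp [integral, hE]
  simp only [integral_gaussianReal_eq_integral_smul hv, ← integral_smul, smul_smul,
    ← exp_mul_gaussianPDFReal, mul_comm (gaussianPDFReal m v _)]

theorem gaussianPDFReal_toNNReal_sq (m : ℝ) {s : ℝ} (hs : 0 ≤ s) (x : ℝ) :
    gaussianPDFReal m (s.toNNReal ^ 2) x
      = 1 / (s * √(2 * π)) * rexp (-(x - m) ^ 2 / (2 * s ^ 2)) := by
  rw [gaussianPDFReal, NNReal.coe_pow, Real.coe_toNNReal s hs, Real.sqrt_mul (by positivity),
    Real.sqrt_sq hs, one_div, mul_comm s]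

theorem sqrt_sq_add_div_mul_sqrt (y w : ℝ) {τ : ℝ} (hτ : 0 < τ) :
    √(y ^ 2 + w / τ) * √τ = √((y * √τ) ^ 2 + w) := by
  rw [← Real.sqrt_mul' _ hτ.le, add_mul, div_mul_cancel₀ _ hτ.ne', mul_pow, Real.sq_sqrt hτ.le]

section BlackScholes

variable {T t y : ℝ} (K r x m : ℝ) (v : ℝ≥0)

theorem integral_stdNormalCDF_dPlus (ht : t < T) (hy : 0 < y) :
    ∫ z, stdNormalCDF (dPlus T K r t (x + z) y) ∂gaussianReal m v
      = stdNormalCDF (dPlus T K r t (x + m - v / 2) (√(y ^ 2 + v / (T - t)))) := by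
  have hτ : 0 < T - t := sub_pos.2 ht
  have hd (z : ℝ) : dPlus T K r t (x + z) y
      = (x - log K + (r + y ^ 2 / 2) * (T - t) + z) / (y * √(T - t)) := by
    rw [dPlus]
    ring
  have hnum : x - log K + (r + y ^ 2 / 2) * (T - t) + m
      = x + m - v / 2 - log K + (r + (y ^ 2 + v / (T - t)) / 2) * (T - t) := by
    field_simp
    ring
  simp only [hd]
  rw [integral_stdNormalCDF_gaussianReal _ (by positivity), dPlus, Real.sq_sqrt (by positivity),
    sqrt_sq_add_div_mul_sqrt y v hτ, hnum]

theorem integral_stdNormalCDF_dMinus (ht : t < T) (hy : 0 < y) :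
    ∫ z, stdNormalCDF (dMinus T K r t (x + z) y) ∂gaussianReal m v
      = stdNormalCDF (dMinus T K r t (x + m + v / 2) (√(y ^ 2 + v / (T - t)))) := by
  have hτ : 0 < T - t := sub_pos.2 ht
  have hd (z : ℝ) : dMinus T K r t (x + z) y
      = (x - log K + (r - y ^ 2 / 2) * (T - t) + z) / (y * √(T - t)) := by
    rw [dMinus]
    ring
  have hnum : x - log K + (r - y ^ 2 / 2) * (T - t) + m
      = x + m + v / 2 - log K + (r - (y ^ 2 + v / (T - t)) / 2) * (T - t) := by
    field_simp
    ring
  simp only [hd]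
  rw [integral_stdNormalCDF_gaussianReal _ (by positivity), dMinus, Real.sq_sqrt (by positivity),
    sqrt_sq_add_div_mul_sqrt y v hτ, hnum]

theorem integral_BS_gaussianReal (ht : t < T) (hy : 0 < y) :
    ∫ z, BS T K r t (x + z) y ∂gaussianReal m v
      = BS T K r t (x + m + v / 2) (√(y ^ 2 + v / (T - t))) := by
  set Φplus : ℝ → ℝ := fun z => stdNormalCDF (dPlus T K r t (x + z) y) with hΦplus
  set Φminus : ℝ → ℝ := fun z => stdNormalCDF (dMinus T K r t (x + z) y) with hΦminus
  have hplus_meas : Measurable Φplus :=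
    measurable_stdNormalCDF.comp (by unfold dPlus; fun_prop)
  have hminus_meas : Measurable Φminus :=
    measurable_stdNormalCDF.comp (by unfold dMinus; fun_prop)
  have hplus_int : Integrable (fun z => rexp (1 * z) * Φplus z) (gaussianReal m v) :=
    (integrable_exp_mul_gaussianReal 1).mul_bdd hplus_meas.aestronglyMeasurable
      (.of_forall fun _ => norm_stdNormalCDF_le_one _)
  have hminus_int : Integrable Φminus (gaussianReal m v) :=
    .of_bound hminus_meas.aestronglyMeasurable 1 (.of_forall fun _ => norm_stdNormalCDF_le_one _)
  have hsplit (z : ℝ) : BS T K r t (x + z) y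
      = rexp x * (rexp (1 * z) * Φplus z) - K * rexp (-r * (T - t)) * Φminus z := by
    rw [BS, Real.exp_add, one_mul, mul_assoc]
  have hplus : ∫ z, rexp (1 * z) * Φplus z ∂gaussianReal m v = rexp (m + v / 2)
      * stdNormalCDF (dPlus T K r t (x + m + v / 2) (√(y ^ 2 + v / (T - t)))) := by
    have hesscher := integral_exp_mul_smul_gaussianReal 1 m v Φplus
    simp only [smul_eq_mul, mul_one, one_pow] at hesscher
    rw [hesscher, hΦplus, integral_stdNormalCDF_dPlus K r x _ v ht hy]
    ring_nf
  simp only [hsplit]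
  rw [integral_sub (hplus_int.const_mul _) (hminus_int.const_mul _), integral_const_mul,
    integral_const_mul, hplus, hΦminus, integral_stdNormalCDF_dMinus K r x m v ht hy, BS,
    ← mul_assoc, ← Real.exp_add, ← add_assoc]

end BlackScholes

/-- Gaussian mixing identity for the Black–Scholes price: integrating the
price against a Gaussian density in the log-price shifts the log-price and
enlarges the volatility. -/
theorem gaussian_mixing_bs (T K r : ℝ) (hT : 0 < T) (hK : 0 < K)
    (x v m s : ℝ) (hv : 0 < v) (hs : 0 < s) :
    ∫ z : ℝ, BS T K r 0 (x + z) v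
        * (1 / (s * Real.sqrt (2 * Real.pi)) * Real.exp (-(z - m) ^ 2 / (2 * s ^ 2)))
      = BS T K r 0 (x + m + s ^ 2 / 2) (Real.sqrt (v ^ 2 + s ^ 2 / T)) := by
  have hvar : s.toNNReal ^ 2 ≠ 0 := pow_ne_zero 2 (Real.toNNReal_pos.2 hs).ne'
  have hvar_coe : ((s.toNNReal ^ 2 : ℝ≥0) : ℝ) = s ^ 2 := by
    rw [NNReal.coe_pow, Real.coe_toNNReal s hs.le]
  have hmix := integral_BS_gaussianReal K r x m (s.toNNReal ^ 2) hT hv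
  simpa only [integral_gaussianReal_eq_integral_smul hvar, gaussianPDFReal_toNNReal_sq m hs.le,
    hvar_coe, smul_eq_mul, mul_comm (BS _ _ _ _ _ _), sub_zero] using hmix
end

section
/- N-fold convolution of the Kou double-exponential density: let p, q ≥ 0 with p + q = 1 and η₁, η₂ > 0, and let f(y) = p η₁ e^{−η₁ y} 1_{y ≥ 0} + q η₂ e^{η₂ y} 1_{y < 0}. Then for every n ≥ 1 the n-fold convolution f^{*n} satisfies, for almost every u ∈ ℝ, f^{*n}(u) = e^{−η₁ u} Σ_{k=1}^{n} P_{n,k} η₁^{k} u^{k−1}/(k−1)! · 1_{u ≥ 0} + e^{η₂ u} Σ_{k=1}^{n} Q_{n,k} η₂^{k} (−u)^{k−1}/(k−1)! · 1_{u < 0}, where for 1 ≤ k ≤ n−1, P_{n,k} = Σ_{i=k}^{n−1} C(n−k−1, i−k) C(n, i) (η₁/(η₁+η₂))^{i−k} (η₂/(η₁+η₂))^{n−i} p^{i} q^{n−i} and Q_{n,k} = Σ_{i=k}^{n−1} C(n−k−1, i−k) C(n, i) (η₁/(η₁+η₂))^{n−i} (η₂/(η₁+η₂))^{i−k} p^{n−i}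 q^{i}, while P_{n,n} = pⁿ and Q_{n,n} = qⁿ. -/
open Real MeasureTheory

/-- Convolution of two real functions. -/
noncomputable def conv (f g : ℝ → ℝ) (u : ℝ) : ℝ := ∫ y, f (u - y) * g y

/-- `convPow f n` is the n-fold convolution f^{*n} (for n ≥ 1);
the value at n = 0 is irrelevant and set to f. -/
noncomputable def convPow (f : ℝ → ℝ) : ℕ → ℝ → ℝ
  | 0 => f
  | 1 => f
  | n + 2 => conv (convPow f (n + 1)) f

/-- The Kou double-exponential jump-size density. -/
noncomputable def kouDensity (p q η₁ η₂ : ℝ) (y : ℝ) : ℝ :=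
  if 0 ≤ y then p * η₁ * Real.exp (-η₁ * y) else q * η₂ * Real.exp (η₂ * y)

/-- The coefficients P_{n,k} in the n-fold convolution of the Kou density. -/
noncomputable def kouP (p q η₁ η₂ : ℝ) (n k : ℕ) : ℝ :=
  if k = n then p ^ n
  else ∑ i ∈ Finset.Icc k (n - 1),
    ((n - k - 1).choose (i - k) : ℝ) * (n.choose i : ℝ)
      * (η₁ / (η₁ + η₂)) ^ (i - k) * (η₂ / (η₁ + η₂)) ^ (n - i)
      * p ^ i * q ^ (n - i)

/-- The coefficients Q_{n,k} in the n-fold convolution of the Kou density. -/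
noncomputable def kouQ (p q η₁ η₂ : ℝ) (n k : ℕ) : ℝ :=
  if k = n then q ^ n
  else ∑ i ∈ Finset.Icc k (n - 1),
    ((n - k - 1).choose (i - k) : ℝ) * (n.choose i : ℝ)
      * (η₁ / (η₁ + η₂)) ^ (n - i) * (η₂ / (η₁ + η₂)) ^ (i - k)
      * p ^ (n - i) * q ^ i

/-!
Up to the normalization of the frequency variable, the Fourier transform of the Kou density is
`p * a + q * b`, where `a = η₁ / (η₁ + i w)` and `b = η₂ / (η₂ - i w)` are the transforms of the two
one-sided exponential densities. By partial fractions `a * b = β * a + α * b` with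
`α = η₁ / (η₁ + η₂)` and `β = η₂ / (η₁ + η₂)`. Expanding `(p * a + q * b) ^ n` binomially and
reducing each product `a ^ i * b ^ m` with this relation leaves only pure powers of `a` and `b`,
with coefficients `P_{n,k}` and `Q_{n,k}`. As `a ^ k` and `b ^ k` are the transforms of the Erlang
density of shape `k` and of its reflection, injectivity of the Fourier transform on `L¹` gives the
formula almost everywhere.
-/

section PowMulPow

open Finset

variable {R : Type*} [CommSemiring R]

/-- The powers of `a` in the expansion of `a ^ i * b ^ m` when `a * b = β * a + α * b`, an iterated
partial fraction decomposition. The coefficients `m.multichoose (i - k)` are those of the power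
series of `(1 - x) ^ (-m)`. -/
def powMulPowPart (α β a : R) (i m : ℕ) : R :=
  β ^ m * ∑ k ∈ Icc 1 i, (m.multichoose (i - k) : R) * α ^ (i - k) * a ^ k

theorem powMulPowPart_zero_left (α β a : R) (m : ℕ) : powMulPowPart α β a 0 m = 0 := by
  simp [powMulPowPart]

theorem powMulPowPart_zero_right (α β a : R) {i : ℕ} (hi : i ≠ 0) :
    powMulPowPart α β a i 0 = a ^ i := by
  have vanish (k) (hk : k ∈ Icc 1 i) (hki : k ≠ i) :
      ((0 : ℕ).multichoose (i - k) : R) * α ^ (i - k) * a ^ k = 0 := by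
    obtain ⟨d, hd⟩ : ∃ d, i - k = d + 1 := Nat.exists_eq_succ_of_ne_zero (by grind)
    simp [hd]
  rw [powMulPowPart, sum_eq_single_of_mem i (by grind) vanish]
  simp

theorem powMulPowPart_succ_succ (α β a : R) (i m : ℕ) :
    powMulPowPart α β a (i + 1) (m + 1) =
      β * powMulPowPart α β a (i + 1) m + α * powMulPowPart α β a i (m + 1) := by
  have pascal (k) (hk : k ∈ Icc 1 i) :
      ((m + 1).multichoose (i + 1 - k) : R) * α ^ (i + 1 - k) * a ^ k =
        m.multichoose (i + 1 - k) * α ^ (i + 1 - k) * a ^ k +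
          α * ((m + 1).multichoose (i - k) * α ^ (i - k) * a ^ k) := by
    rw [Nat.sub_add_comm (mem_Icc.1 hk).2, Nat.multichoose_succ_succ]
    push_cast
    ring
  simp only [powMulPowPart, sum_Icc_succ_top (Nat.le_add_left 1 i), sum_congr rfl pascal,
    sum_add_distrib, ← mul_sum, Nat.sub_self, Nat.multichoose_zero_right]
  ring

theorem pow_mul_pow_eq_powMulPowPart_add {α β a b : R} (hab : a * b = β * a + α * b) :
    ∀ {i m : ℕ}, i + m ≠ 0 →
      a ^ i * b ^ m = powMulPowPart α β a i m + powMulPowPart β α b m i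
  | 0, 0, h => absurd rfl h
  | 0, m + 1, _ => by simp [powMulPowPart_zero_left, powMulPowPart_zero_right]
  | i + 1, 0, _ => by simp [powMulPowPart_zero_left, powMulPowPart_zero_right]
  | i + 1, m + 1, _ => by
    calc a ^ (i + 1) * b ^ (m + 1) = a ^ i * b ^ m * (a * b) := by ring
      _ = β * (a ^ (i + 1) * b ^ m) + α * (a ^ i * b ^ (m + 1)) := by rw [hab]; ring
      _ = powMulPowPart α β a (i + 1) (m + 1) + powMulPowPart β α b (m + 1) (i + 1) := by
        rw [pow_mul_pow_eq_powMulPowPart_add hab (by lia),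
          pow_mul_pow_eq_powMulPowPart_add hab (by lia), powMulPowPart_succ_succ,
          powMulPowPart_succ_succ]
        ring

/-- The coefficient of `a ^ k` in `(p * a + q * b) ^ n` when `a * b = β * a + α * b`; that of
`b ^ k` is obtained by exchanging `α` with `β` and `p` with `q`. -/
def addPowCoeff (α β p q : R) (n k : ℕ) : R :=
  ∑ i ∈ Icc k n, ((n - i).multichoose (i - k) : R) * n.choose i *
    α ^ (i - k) * β ^ (n - i) * p ^ i * q ^ (n - i)

theorem sum_powMulPowPart_mul_choose (α β p q a : R) (n : ℕ) :
    ∑ i ∈ range (n + 1), p ^ i * q ^ (n - i) * n.choose i * powMulPowPart α β a i (n - i) =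
      ∑ k ∈ Icc 1 n, addPowCoeff α β p q n k * a ^ k := by
  simp only [powMulPowPart, addPowCoeff, mul_sum, sum_mul]
  rw [sum_comm' (t' := Icc 1 n) (s' := fun k ↦ Icc k n) (by grind)]
  refine sum_congr rfl fun k _ ↦ sum_congr rfl fun i _ ↦ ?_
  ring

theorem add_pow_eq_sum_addPowCoeff {α β a b : R} (hab : a * b = β * a + α * b) (p q : R) {n : ℕ}
    (hn : n ≠ 0) :
    (p * a + q * b) ^ n =
      ∑ k ∈ Icc 1 n, addPowCoeff α β p q n k * a ^ k +
        ∑ k ∈ Icc 1 n, addPowCoeff β α q p n k * b ^ k := by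
  have binomial_term (i) (hi : i ∈ range (n + 1)) :
      (p * a) ^ i * (q * b) ^ (n - i) * n.choose i =
        p ^ i * q ^ (n - i) * n.choose i * powMulPowPart α β a i (n - i) +
          p ^ i * q ^ (n - i) * n.choose i * powMulPowPart β α b (n - i) i := by
    rw [← mul_add, ← pow_mul_pow_eq_powMulPowPart_add hab (by grind)]
    ring
  rw [add_pow, sum_congr rfl binomial_term, sum_add_distrib, sum_powMulPowPart_mul_choose,
    ← sum_powMulPowPart_mul_choose β α q p b, ← sum_flip]
  congr 1
  refine sum_congr rfl fun i hi ↦ ?_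
  have hin : i ≤ n := Nat.lt_succ_iff.1 (mem_range.1 hi)
  rw [Nat.sub_sub_self hin, Nat.choose_symm hin]
  ring

theorem map_addPowCoeff {S : Type*} [CommSemiring S] (φ : R →+* S) (α β p q : R) (n k : ℕ) :
    φ (addPowCoeff α β p q n k) = addPowCoeff (φ α) (φ β) (φ p) (φ q) n k := by
  simp [addPowCoeff]

theorem smul_add_smul_pow_eq_sum_addPowCoeff {A : Type*} [CommSemiring A] [Algebra R A] {α β : R}
    {a b : A} (hab : a * b = β • a + α • b) (p q : R) {n : ℕ} (hn : n ≠ 0) :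
    (p • a + q • b) ^ n =
      ∑ k ∈ Icc 1 n, addPowCoeff α β p q n k • a ^ k +
        ∑ k ∈ Icc 1 n, addPowCoeff β α q p n k • b ^ k := by
  simp only [Algebra.smul_def, map_addPowCoeff] at hab ⊢
  exact add_pow_eq_sum_addPowCoeff hab _ _ hn

end PowMulPow

open ProbabilityTheory
open scoped FourierTransform Convolution ContDiff

section FourierInjectivity

variable {V E : Type*} [NormedAddCommGroup V] [InnerProductSpace ℝ V] [FiniteDimensional ℝ V]
  [MeasurableSpace V] [BorelSpace V] [NormedAddCommGroup E] [NormedSpace ℂ E] [CompleteSpace E]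

theorem integral_fourier_smul_eq_integral_smul_fourier {g : V → ℂ} {f : V → E}
    (hg : Integrable g) (hf : Integrable f) : ∫ x, 𝓕 g x • f x = ∫ x, g x • 𝓕 f x := by
  simpa using! VectorFourier.integral_fourierIntegral_smul_eq_flip (L := innerₗ V)
    continuous_fourierChar continuous_inner hg hf

theorem ae_eq_zero_of_fourier_eq_zero {f : V → E} (hf : Integrable f) (h : 𝓕 f = 0) :
    f =ᵐ[volume] 0 := by
  refine ae_eq_zero_of_integral_contDiff_smul_eq_zero hf.locallyIntegrable fun g hg hg_supp ↦ ?_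
  have hg_cpt : HasCompactSupport fun x ↦ (g x : ℂ) := hg_supp.comp_left Complex.ofReal_zero
  have hg_diff : ContDiff ℝ ∞ fun x ↦ (g x : ℂ) := Complex.ofRealCLM.contDiff.comp hg
  let φ := 𝓕⁻ (hg_cpt.toSchwartzMap hg_diff)
  have hφ : 𝓕 (φ : V → ℂ) = fun x ↦ (g x : ℂ) := by
    rw [← SchwartzMap.fourier_coe, FourierTransform.fourier_fourierInv_eq]
    rfl
  calc ∫ x, g x • f x = ∫ x, 𝓕 (φ : V → ℂ) x • f x := by simp [hφ]
    _ = ∫ x, φ x • 𝓕 f x := integral_fourier_smul_eq_integral_smul_fourier φ.integrable hf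
    _ = 0 := by simp [h]

end FourierInjectivity

/-- `f` is integrable with Fourier transform `φ`, in the convention
`φ w = ∫ x, exp (-2 * π * x * w * I) * f x`. -/
structure HasFourierTransform (f : ℝ → ℝ) (φ : ℝ → ℂ) : Prop where
  integrable : Integrable f
  fourier_eq : 𝓕 (fun x ↦ (f x : ℂ)) = φ

namespace HasFourierTransform

variable {f g : ℝ → ℝ} {φ ψ : ℝ → ℂ}

theorem congr_ae (hf : HasFourierTransform f φ) (hfg : f =ᵐ[volume] g) :
    HasFourierTransform g φ where
  integrable := hf.integrable.congr hfg
  fourier_eq := by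
    rw [← hf.fourier_eq]
    ext w
    refine integral_congr_ae ?_
    filter_upwards [hfg] with x hx
    rw [hx]

theorem add (hf : HasFourierTransform f φ) (hg : HasFourierTransform g ψ) :
    HasFourierTransform (f + g) (φ + ψ) where
  integrable := hf.integrable.add hg.integrable
  fourier_eq := by
    rw [← hf.fourier_eq, ← hg.fourier_eq]
    simpa [Pi.add_def] using! VectorFourier.fourierIntegral_add (L := innerₗ ℝ)
      continuous_fourierChar continuous_inner hf.integrable.ofReal hg.integrable.ofReal

theorem const_smul (c : ℝ) (hf : HasFourierTransform f φ) :
    HasFourierTransform (c • f) (c • φ) where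
  integrable := hf.integrable.smul c
  fourier_eq := by
    rw [← hf.fourier_eq]
    ext w
    simp [fourier_real_eq, integral_const_mul, Circle.smul_def, mul_left_comm]

theorem sum {ι : Type*} {s : Finset ι} {f : ι → ℝ → ℝ} {φ : ι → ℝ → ℂ}
    (hf : ∀ i ∈ s, HasFourierTransform (f i) (φ i)) :
    HasFourierTransform (∑ i ∈ s, f i) (∑ i ∈ s, φ i) := by
  induction s using Finset.cons_induction with
  | empty => exact ⟨integrable_zero .., by ext w; simp [fourier_real_eq]⟩
  | cons i s hi ih =>
    rw [Finset.sum_cons, Finset.sum_cons]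
    exact (hf i (by simp)).add (ih fun j hj ↦ hf j (by simp [hj]))

theorem comp_neg (hf : HasFourierTransform f φ) :
    HasFourierTransform (fun x ↦ f (-x)) (fun w ↦ φ (-w)) where
  integrable := hf.integrable.comp_neg
  fourier_eq := by
    rw [← fourierInv_eq_fourier_comp_neg fun x ↦ (f x : ℂ), ← hf.fourier_eq]
    ext w
    exact fourierInv_eq_fourier_neg _ w

theorem ae_eq (hf : HasFourierTransform f φ) (hg : HasFourierTransform g φ) :
    f =ᵐ[volume] g := by
  have h := hf.add (hg.const_smul (-1))
  have h_zero := ae_eq_zero_of_fourier_eq_zero h.integrable.ofReal (h.fourier_eq.trans (by simp))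
  filter_upwards [h_zero] with x hx
  simpa [← sub_eq_add_neg, sub_eq_zero] using Complex.ofReal_eq_zero.1 hx

end HasFourierTransform

theorem conv_eq_convolution (f g : ℝ → ℝ) : conv f g = f ⋆[.mul ℝ ℝ] g := by
  ext u
  rw [convolution_eq_swap]
  rfl

protected theorem HasFourierTransform.conv {f g : ℝ → ℝ} {φ ψ : ℝ → ℂ}
    (hf : HasFourierTransform f φ) (hg : HasFourierTransform g ψ) :
    HasFourierTransform (conv f g) (φ * ψ) where
  integrable := by
    rw [conv_eq_convolution]
    exact hf.integrable.integrable_convolution _ hg.integrable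
  fourier_eq := by
    have ofReal_conv : (fun u ↦ (conv f g u : ℂ)) =
        (fun x ↦ (f x : ℂ)) ⋆[.mul ℂ ℂ] (fun x ↦ (g x : ℂ)) := by
      ext u
      rw [conv_eq_convolution, convolution, ← integral_complex_ofReal]
      simp [convolution]
    ext w
    rw [ofReal_conv, Pi.mul_apply, ← hf.fourier_eq, ← hg.fourier_eq]
    exact fourier_mul_convolution_eq hf.integrable.ofReal hg.integrable.ofReal w

protected theorem HasFourierTransform.convPow {f : ℝ → ℝ} {φ : ℝ → ℂ} (hf : HasFourierTransform f φ)
    {n : ℕ} (hn : 1 ≤ n) : HasFourierTransform (convPow f n) (φ ^ n) := by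
  induction n, hn using Nat.le_induction with
  | base => simpa [convPow] using hf
  | succ n hn ih =>
    obtain ⟨n, rfl⟩ := Nat.exists_eq_add_of_le' hn
    rw [pow_succ]
    exact ih.conv hf

theorem gammaPDFReal_natCast {k : ℕ} (hk : 1 ≤ k) (r : ℝ) {u : ℝ} (hu : 0 ≤ u) :
    gammaPDFReal k r u = exp (-r * u) * (r ^ k * u ^ (k - 1) / (k - 1).factorial) := by
  obtain ⟨m, rfl⟩ := Nat.exists_eq_add_of_le' hk
  have hΓ : Gamma ((m + 1 : ℕ) : ℝ) = m.factorial := by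
    rw [Nat.cast_succ, Gamma_nat_eq_factorial]
  have hpow : u ^ (((m + 1 : ℕ) : ℝ) - 1) = u ^ m := by
    rw [Nat.cast_succ, add_sub_cancel_right, rpow_natCast]
  rw [gammaPDFReal, if_pos hu, hΓ, hpow, rpow_natCast, Nat.add_sub_cancel, neg_mul]
  ring

theorem gammaPDFReal_of_neg (a r : ℝ) {u : ℝ} (hu : u < 0) : gammaPDFReal a r u = 0 :=
  if_neg hu.not_ge

theorem gammaPDFReal_sub_mul_gammaPDFReal_one (a : ℝ) {r : ℝ} (hr : r ≠ 0) (u y : ℝ) :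
    gammaPDFReal a r (u - y) * gammaPDFReal 1 r y =
      (Set.Icc 0 u).indicator
        (fun y ↦ r ^ (a + 1) / Gamma a * exp (-(r * u)) * (u - y) ^ (a - 1)) y := by
  by_cases hy : y ∈ Set.Icc 0 u
  · have hexp : exp (-(r * (u - y))) * exp (-(r * y)) = exp (-(r * u)) := by
      rw [← exp_add]
      ring_nf
    rw [Set.indicator_of_mem hy, gammaPDFReal, gammaPDFReal, if_pos (sub_nonneg.2 hy.2),
      if_pos hy.1, ← hexp, rpow_add_one hr, rpow_one, Gamma_one, div_one, sub_self, rpow_zero]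
    ring
  · rw [Set.indicator_of_notMem hy]
    obtain hy | hy : y < 0 ∨ u - y < 0 := by grind
    all_goals simp [gammaPDFReal_of_neg _ _ hy]

theorem conv_gammaPDFReal_one {a r : ℝ} (ha : 0 < a) (hr : r ≠ 0) :
    conv (gammaPDFReal a r) (gammaPDFReal 1 r) = gammaPDFReal (a + 1) r := by
  ext u
  simp only [conv, gammaPDFReal_sub_mul_gammaPDFReal_one a hr]
  rw [integral_indicator measurableSet_Icc]
  rcases lt_or_ge u 0 with hu | hu
  · simp [hu, gammaPDFReal_of_neg]
  have power_integral : ∫ y in 0..u, (u - y) ^ (a - 1) = u ^ a / a := by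
    rw [intervalIntegral.integral_comp_sub_left (· ^ (a - 1)), sub_self, sub_zero,
      integral_rpow (.inl (by linarith)), sub_add_cancel, zero_rpow ha.ne', sub_zero]
  rw [integral_Icc_eq_integral_Ioc, ← intervalIntegral.integral_of_le hu,
    intervalIntegral.integral_const_mul, power_integral, gammaPDFReal, if_pos hu,
    Gamma_add_one ha.ne', add_sub_cancel_right]
  field_simp

theorem integrable_gammaPDFReal {a r : ℝ} (ha : 0 < a) (hr : 0 < r) :
    Integrable (gammaPDFReal a r) := by
  refine ⟨(measurable_gammaPDFReal a r).aestronglyMeasurable, ?_⟩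
  rw [hasFiniteIntegral_iff_ofReal (.of_forall (gammaPDFReal_nonneg ha hr))]
  exact (lintegral_gammaPDF_eq_one ha hr).trans_lt ENNReal.one_lt_top

/-- The Fourier transform, in the convention of `HasFourierTransform`, of the exponential density
of rate `r`. -/
noncomputable def expFourier (r w : ℝ) : ℂ := r / (r + 2 * π * w * Complex.I)

theorem add_two_pi_mul_I_ne_zero {r : ℝ} (hr : r ≠ 0) (w : ℝ) :
    (r + 2 * π * w * Complex.I : ℂ) ≠ 0 :=
  fun h ↦ hr (by simpa using congrArg Complex.re h)

theorem expFourier_mul_expFourier_neg {r s : ℝ} (hr : 0 < r) (hs : 0 < s) (w : ℝ) :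
    expFourier r w * expFourier s (-w) =
      (s / (r + s)) • expFourier r w + (r / (r + s)) • expFourier s (-w) := by
  have hrs : (r + s : ℂ) ≠ 0 := mod_cast (add_pos hr hs).ne'
  have hrw := add_two_pi_mul_I_ne_zero hr.ne' w
  have hsw : (s - 2 * π * w * Complex.I : ℂ) ≠ 0 := by
    simpa [sub_eq_add_neg] using add_two_pi_mul_I_ne_zero hs.ne' (-w)
  simp only [expFourier, Complex.real_smul, Complex.ofReal_neg, mul_neg, neg_mul, ← sub_eq_add_neg]
  push_cast
  field_simp
  ring

theorem exp_smul_gammaPDFReal_one (r w x : ℝ) :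
    Complex.exp (↑(-2 * π * x * w) * Complex.I) • (gammaPDFReal 1 r x : ℂ) =
      (Set.Ici 0).indicator
        (fun x : ℝ ↦ r * Complex.exp (-(r + 2 * π * w * Complex.I) * x)) x := by
  by_cases hx : 0 ≤ x
  · have hexp : Complex.exp (↑(-2 * π * x * w) * Complex.I) * Complex.exp (-(r * x)) =
        Complex.exp (-(r + 2 * π * w * Complex.I) * x) := by
      rw [← Complex.exp_add]
      push_cast
      ring_nf
    rw [Set.indicator_of_mem (Set.mem_Ici.2 hx), gammaPDFReal, if_pos hx, ← hexp]
    simp [mul_left_comm]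
  · simp [hx, gammaPDFReal_of_neg _ _ (not_le.1 hx)]

theorem hasFourierTransform_gammaPDFReal_one {r : ℝ} (hr : 0 < r) :
    HasFourierTransform (gammaPDFReal 1 r) (expFourier r) where
  integrable := integrable_gammaPDFReal one_pos hr
  fourier_eq := by
    ext w
    have hre : (-(r + 2 * π * w * Complex.I : ℂ)).re < 0 := by simpa
    simp only [fourier_real_eq_integral_exp_smul, exp_smul_gammaPDFReal_one]
    rw [integral_indicator measurableSet_Ici, integral_Ici_eq_integral_Ioi, integral_const_mul,
      integral_exp_mul_complex_Ioi hre, Complex.ofReal_zero, mul_zero, Complex.exp_zero,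
      neg_div_neg_eq, mul_one_div, expFourier]

theorem hasFourierTransform_gammaPDFReal {r : ℝ} (hr : 0 < r) {k : ℕ} (hk : 1 ≤ k) :
    HasFourierTransform (gammaPDFReal k r) (expFourier r ^ k) := by
  induction k, hk using Nat.le_induction with
  | base => simpa using hasFourierTransform_gammaPDFReal_one hr
  | succ k hk ih =>
    rw [Nat.cast_succ, ← conv_gammaPDFReal_one (mod_cast hk) hr.ne', pow_succ]
    exact ih.conv (hasFourierTransform_gammaPDFReal_one hr)

theorem HasFourierTransform.ite_nonneg {f g : ℝ → ℝ} {φ ψ : ℝ → ℂ}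
    (hf : HasFourierTransform f φ) (hg : HasFourierTransform g ψ) (hf_neg : ∀ u < 0, f u = 0)
    (hg_neg : ∀ u < 0, g u = 0) :
    HasFourierTransform (fun u ↦ if 0 ≤ u then f u else g (-u)) (φ + fun w ↦ ψ (-w)) := by
  refine (hf.add hg.comp_neg).congr_ae ?_
  filter_upwards [Measure.ae_ne volume 0] with u hu
  rcases hu.lt_or_gt with hu | hu
  · simp [hu.not_ge, hf_neg u hu]
  · simp [hu.le, hg_neg (-u) (neg_lt_zero.2 hu)]

/-- The linear combination, with arbitrary real weights `c`, of the Erlang densities of rate `r`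
and shapes `1, …, n`. -/
noncomputable def erlangComb (r : ℝ) (n : ℕ) (c : ℕ → ℝ) : ℝ → ℝ :=
  ∑ k ∈ Finset.Icc 1 n, c k • gammaPDFReal k r

theorem erlangComb_of_nonneg (r : ℝ) (n : ℕ) (c : ℕ → ℝ) {u : ℝ} (hu : 0 ≤ u) :
    erlangComb r n c u =
      exp (-r * u) * ∑ k ∈ Finset.Icc 1 n, c k * r ^ k * u ^ (k - 1) / (k - 1).factorial := by
  rw [erlangComb, Finset.sum_apply, Finset.mul_sum]
  refine Finset.sum_congr rfl fun k hk ↦ ?_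
  rw [Pi.smul_apply, gammaPDFReal_natCast (Finset.mem_Icc.1 hk).1 r hu, smul_eq_mul]
  ring

theorem erlangComb_of_neg (r : ℝ) (n : ℕ) (c : ℕ → ℝ) {u : ℝ} (hu : u < 0) :
    erlangComb r n c u = 0 := by
  simp [erlangComb, gammaPDFReal_of_neg _ _ hu]

theorem hasFourierTransform_erlangComb {r : ℝ} (hr : 0 < r) (n : ℕ) (c : ℕ → ℝ) :
    HasFourierTransform (erlangComb r n c)
      (∑ k ∈ Finset.Icc 1 n, c k • expFourier r ^ k) :=
  .sum fun k hk ↦ (hasFourierTransform_gammaPDFReal hr (Finset.mem_Icc.1 hk).1).const_smul (c k)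

/-- The function given by an Erlang combination of rate `r` on `[0, ∞)` and by the reflection of
one of rate `s` on `(-∞, 0)`. -/
noncomputable def bilateralErlangComb (r s : ℝ) (n : ℕ) (c d : ℕ → ℝ) (u : ℝ) : ℝ :=
  if 0 ≤ u then erlangComb r n c u else erlangComb s n d (-u)

theorem hasFourierTransform_bilateralErlangComb {r s : ℝ} (hr : 0 < r) (hs : 0 < s) (n : ℕ)
    (c d : ℕ → ℝ) :
    HasFourierTransform (bilateralErlangComb r s n c d)
      (∑ k ∈ Finset.Icc 1 n, c k • expFourier r ^ k +
        ∑ k ∈ Finset.Icc 1 n, d k • (fun w ↦ expFourier s (-w)) ^ k) := by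
  have h := (hasFourierTransform_erlangComb hr n c).ite_nonneg
    (hasFourierTransform_erlangComb hs n d) (fun _ ↦ erlangComb_of_neg r n c)
    (fun _ ↦ erlangComb_of_neg s n d)
  convert! h using 2
  ext w
  simp

theorem bilateralErlangComb_apply (r s : ℝ) (n : ℕ) (c d : ℕ → ℝ) (u : ℝ) :
    bilateralErlangComb r s n c d u =
      if 0 ≤ u then
        exp (-r * u) * ∑ k ∈ Finset.Icc 1 n, c k * r ^ k * u ^ (k - 1) / (k - 1).factorial
      else
        exp (s * u) * ∑ k ∈ Finset.Icc 1 n, d k * s ^ k * (-u) ^ (k - 1) / (k - 1).factorial := by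
  unfold bilateralErlangComb
  split_ifs with hu
  · exact erlangComb_of_nonneg r n c hu
  · rw [erlangComb_of_nonneg s n d (by linarith), neg_mul_neg]

theorem kouDensity_eq_bilateralErlangComb (p q η₁ η₂ : ℝ) :
    kouDensity p q η₁ η₂ = bilateralErlangComb η₁ η₂ 1 (fun _ ↦ p) (fun _ ↦ q) := by
  ext u
  simp [bilateralErlangComb_apply, kouDensity, mul_comm]

theorem kouP_eq_addPowCoeff (p q η₁ η₂ : ℝ) {n k : ℕ} (hkn : k ≤ n) :
    kouP p q η₁ η₂ n k = addPowCoeff (η₁ / (η₁ + η₂)) (η₂ / (η₁ + η₂)) p q n k := by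
  rcases hkn.eq_or_lt with rfl | hkn
  · simp [kouP, addPowCoeff]
  obtain ⟨m, rfl⟩ : ∃ m, n = m + 1 := ⟨n - 1, by lia⟩
  obtain ⟨d, hd⟩ : ∃ d, m + 1 - k = d + 1 := ⟨m - k, by lia⟩
  -- The top term `i = n`, absent from `kouP`, vanishes because `multichoose 0 (d + 1) = 0`.
  rw [kouP, addPowCoeff, if_neg hkn.ne, Finset.sum_Icc_succ_top (by lia), Nat.sub_self, hd,
    Nat.multichoose_zero_succ]
  simp only [Nat.cast_zero, zero_mul, add_zero]
  refine Finset.sum_congr rfl fun i hi ↦ ?_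
  rw [Nat.multichoose_eq, show m + 1 - i + (i - k) - 1 = d + 1 - 1 by grind]

theorem kouQ_eq_kouP (p q η₁ η₂ : ℝ) (n k : ℕ) : kouQ p q η₁ η₂ n k = kouP q p η₂ η₁ n k := by
  simp only [kouQ, kouP, add_comm η₂ η₁]
  refine if_congr Iff.rfl rfl (Finset.sum_congr rfl fun i _ ↦ ?_)
  ring

theorem smul_expFourier_add_smul_expFourier_pow (p q : ℝ) {η₁ η₂ : ℝ} (h1 : 0 < η₁)
    (h2 : 0 < η₂) {n : ℕ} (hn : n ≠ 0) :
    (p • expFourier η₁ + q • fun w ↦ expFourier η₂ (-w)) ^ n =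
      ∑ k ∈ Finset.Icc 1 n, kouP p q η₁ η₂ n k • expFourier η₁ ^ k +
        ∑ k ∈ Finset.Icc 1 n, kouQ p q η₁ η₂ n k • (fun w ↦ expFourier η₂ (-w)) ^ k := by
  have partial_fractions := funext (expFourier_mul_expFourier_neg h1 h2)
  rw [smul_add_smul_pow_eq_sum_addPowCoeff partial_fractions p q hn]
  congr 1 <;> refine Finset.sum_congr rfl fun k hk ↦ ?_
  · rw [kouP_eq_addPowCoeff _ _ _ _ (Finset.mem_Icc.1 hk).2]
  · rw [kouQ_eq_kouP, kouP_eq_addPowCoeff _ _ _ _ (Finset.mem_Icc.1 hk).2, add_comm η₂ η₁]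

theorem kou_convPow_general (p q η₁ η₂ : ℝ) (h1 : 0 < η₁) (h2 : 0 < η₂) (n : ℕ) (hn : 1 ≤ n) :
    ∀ᵐ u : ℝ ∂volume,
      convPow (kouDensity p q η₁ η₂) n u =
        if 0 ≤ u then
          Real.exp (-η₁ * u) * ∑ k ∈ Finset.Icc 1 n,
            kouP p q η₁ η₂ n k * η₁ ^ k * u ^ (k - 1) / (k - 1).factorial
        else
          Real.exp (η₂ * u) * ∑ k ∈ Finset.Icc 1 n,
            kouQ p q η₁ η₂ n k * η₂ ^ k * (-u) ^ (k - 1) / (k - 1).factorial := by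
  have density : HasFourierTransform (kouDensity p q η₁ η₂)
      (p • expFourier η₁ + q • fun w ↦ expFourier η₂ (-w)) := by
    simpa [kouDensity_eq_bilateralErlangComb] using
      hasFourierTransform_bilateralErlangComb h1 h2 1 (fun _ ↦ p) (fun _ ↦ q)
  have power := density.convPow hn
  rw [smul_expFourier_add_smul_expFourier_pow p q h1 h2 (Nat.one_le_iff_ne_zero.1 hn)] at power
  simp only [← bilateralErlangComb_apply]
  exact power.ae_eq (hasFourierTransform_bilateralErlangComb h1 h2 n _ _)

/-- Closed form of the n-fold convolution of the Kou double-exponential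
density. -/
theorem kou_convPow (p q η₁ η₂ : ℝ) (hp : 0 ≤ p) (hq : 0 ≤ q) (hpq : p + q = 1)
    (h1 : 0 < η₁) (h2 : 0 < η₂) (n : ℕ) (hn : 1 ≤ n) :
    ∀ᵐ u : ℝ ∂volume,
      convPow (kouDensity p q η₁ η₂) n u =
        if 0 ≤ u then
          Real.exp (-η₁ * u) * ∑ k ∈ Finset.Icc 1 n,
            kouP p q η₁ η₂ n k * η₁ ^ k * u ^ (k - 1) / (k - 1).factorial
        else
          Real.exp (η₂ * u) * ∑ k ∈ Finset.Icc 1 n,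
            kouQ p q η₁ η₂ n k * η₂ ^ k * (-u) ^ (k - 1) / (k - 1).factorial :=
  kou_convPow_general p q η₁ η₂ h1 h2 n hn
end

section
/- N-fold convolution of the uniform density (density of the sum of n i.i.d. uniform random variables, used for log-uniform jump amplitudes): let a < b be real numbers and let f(y) = (1/(b−a)) · 1_{[a,b]}(y). Then for every n ≥ 1 the n-fold convolution f^{*n} satisfies, for almost every u ∈ ℝ: if n a ≤ u ≤ n b then f^{*n}(u) = ( Σ_{i=0}^{ñ(n,u)} (−1)^{i} C(n,i) (u − n a − i(b−a))^{n−1} ) / ( (n−1)! (b−a)^{n} ), where ñ(n,u) = ⌊(u − n a)/(b−a)⌋; and f^{*n}(u) = 0 if u < n a or u > n b. -/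
open Real MeasureTheory

/-!
Convolving with the uniform density on `[a, b]` is, up to translation, the difference quotient with
step `b - a` of a primitive. The step function `x_+^0` yields the uniform density as its difference
quotient, and `x_+^(n+1) / (n+1)!` is a primitive of `x_+^n / n!`, so the `n`-fold convolution is
the `n`-th iterated difference quotient of `x_+^(n-1) / (n-1)!`. Expanding the iterated difference
binomially and dropping the terms killed by the truncation gives the closed form on `[na, nb]`;
outside this interval the convolution vanishes because supports add under convolution.
-/

open scoped fwdDiff Nat Pointwise

section Support

variable {f : ℝ → ℝ} {a b : ℝ}

lemma support_conv_subset (f g : ℝ → ℝ) : (conv f g).support ⊆ f.support + g.support := by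
  intro u hu
  obtain ⟨y, hy⟩ : ∃ y, f (u - y) * g y ≠ 0 := by
    by_contra! h
    exact hu (by simp [conv, h])
  exact ⟨u - y, left_ne_zero_of_mul hy, y, right_ne_zero_of_mul hy, sub_add_cancel u y⟩

lemma support_convPow_subset_Icc (hf : f.support ⊆ Set.Icc a b) {n : ℕ} (hn : 1 ≤ n) :
    (convPow f n).support ⊆ Set.Icc (n * a) (n * b) := by
  induction n, hn using Nat.le_induction with
  | base => simpa [convPow] using hf
  | succ n hn ih =>
    obtain ⟨m, rfl⟩ := Nat.exists_eq_add_of_le' hn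
    calc (convPow f (m + 2)).support
        ⊆ (convPow f (m + 1)).support + f.support := support_conv_subset _ _
      _ ⊆ Set.Icc ((m + 1 : ℕ) * a) ((m + 1 : ℕ) * b) + Set.Icc a b := Set.add_subset_add ih hf
      _ ⊆ Set.Icc ((m + 1 : ℕ) * a + a) ((m + 1 : ℕ) * b + b) := Set.Icc_add_Icc_subset _ _ _ _
      _ = Set.Icc ((m + 1 + 1 : ℕ) * a) ((m + 1 + 1 : ℕ) * b) := by
        congr 1 <;> push_cast <;> ring

end Support

section ForwardDifference

lemma fwdDiff_iter_sub_nsmul {M G : Type*} [AddCommGroup M] [AddCommGroup G] (f : M → G)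
    (n : ℕ) (x h : M) :
    Δ_[h] ^[n] f (x - n • h) =
      ∑ i ∈ Finset.range (n + 1), ((-1 : ℤ) ^ i * n.choose i) • f (x - i • h) := by
  rw [fwdDiff_iter_eq_sum_shift, ← Finset.sum_flip]
  refine Finset.sum_congr rfl fun i hi => ?_
  have hin : i ≤ n := Nat.lt_succ_iff.mp (Finset.mem_range.mp hi)
  rw [Nat.sub_sub_self hin, Nat.choose_symm hin, sub_nsmul _ hin]
  congr 2
  abel

variable {E : Type*} [NormedAddCommGroup E] {f F : ℝ → E}

lemma intervalIntegrable_fwdDiff (hf : ∀ s t, IntervalIntegrable f volume s t) (h s t : ℝ) :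
    IntervalIntegrable (Δ_[h] f) volume s t :=
  ((IntervalIntegrable.comp_add_right_iff (by finiteness)).mpr (hf _ _)).sub (hf s t)

lemma integral_fwdDiff_iter [NormedSpace ℝ E] (hf : ∀ s t, IntervalIntegrable f volume s t)
    (hF : ∀ s t, ∫ x in s..t, f x = F t - F s) (h : ℝ) (n : ℕ) (s t : ℝ) :
    ∫ x in s..t, Δ_[h] ^[n] f x = Δ_[h] ^[n] F t - Δ_[h] ^[n] F s := by
  induction n generalizing f F with
  | zero => exact hF s t
  | succ _ ih =>
    refine ih (intervalIntegrable_fwdDiff hf h) fun s t => ?_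
    calc ∫ x in s..t, Δ_[h] f x
        = (∫ x in s..t, f (x + h)) - ∫ x in s..t, f x :=
          intervalIntegral.integral_sub
            ((IntervalIntegrable.comp_add_right_iff (by finiteness)).mpr (hf _ _)) (hf s t)
      _ = Δ_[h] F t - Δ_[h] F s := by
        rw [intervalIntegral.integral_comp_add_right, hF, hF, fwdDiff, fwdDiff]
        abel

end ForwardDifference

section TruncDividedPow

/-- The truncated divided power `x_+^n / n!`, the `(n+1)`-fold primitive of the Dirac mass at `0`.
For `n = 0` it is the Heaviside step function with value `1` at `0`. -/
noncomputable def truncDividedPow (n : ℕ) (x : ℝ) : ℝ := if 0 ≤ x then x ^ n / n ! else 0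

variable {n : ℕ} {x h : ℝ}

lemma truncDividedPow_of_nonneg (hx : 0 ≤ x) : truncDividedPow n x = x ^ n / n ! := if_pos hx

lemma truncDividedPow_of_neg (hx : x < 0) : truncDividedPow n x = 0 := if_neg hx.not_ge

lemma monotone_truncDividedPow (n : ℕ) : Monotone (truncDividedPow n) := by
  intro x y hxy
  unfold truncDividedPow
  split_ifs with hx hy
  · gcongr
  · exact absurd (hx.trans hxy) hy
  · positivity
  · rfl

lemma intervalIntegrable_truncDividedPow (n : ℕ) (s t : ℝ) :
    IntervalIntegrable (truncDividedPow n) volume s t :=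
  (monotone_truncDividedPow n).intervalIntegrable

lemma integral_truncDividedPow_from_zero (n : ℕ) (t : ℝ) :
    ∫ x in 0..t, truncDividedPow n x = truncDividedPow (n + 1) t := by
  rcases le_or_gt 0 t with ht | ht
  · calc ∫ x in 0..t, truncDividedPow n x
        = ∫ x in 0..t, x ^ n / n ! := intervalIntegral.integral_congr_Ioo_of_le ht
          fun x hx => truncDividedPow_of_nonneg hx.1.le
      _ = t ^ (n + 1) / (n + 1)! := by
        simp [Nat.factorial_succ, div_div]
      _ = truncDividedPow (n + 1) t := (truncDividedPow_of_nonneg ht).symm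
  · calc ∫ x in 0..t, truncDividedPow n x
        = ∫ _ in 0..t, (0 : ℝ) := intervalIntegral.integral_congr_uIoo fun x hx =>
          truncDividedPow_of_neg (by simpa [ht.le] using hx.2)
      _ = truncDividedPow (n + 1) t := by simp [truncDividedPow_of_neg ht]

lemma integral_truncDividedPow (n : ℕ) (s t : ℝ) :
    ∫ x in s..t, truncDividedPow n x = truncDividedPow (n + 1) t - truncDividedPow (n + 1) s := by
  rw [← integral_truncDividedPow_from_zero, ← integral_truncDividedPow_from_zero,
    intervalIntegral.integral_interval_sub_left] <;>
  exact intervalIntegrable_truncDividedPow n _ _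

lemma sum_truncDividedPow_eq_sum_range_floor (c : ℕ → ℝ) (n : ℕ) {N : ℕ} (hh : 0 < h)
    (hx : 0 ≤ x) (hN : x ≤ N * h) :
    ∑ i ∈ Finset.range (N + 1), c i * truncDividedPow n (x - i * h) =
      (∑ i ∈ Finset.range (⌊x / h⌋₊ + 1), c i * (x - i * h) ^ n) / n ! := by
  have mem_iff (i : ℕ) : i ∈ Finset.range (⌊x / h⌋₊ + 1) ↔ 0 ≤ x - i * h := by
    rw [Finset.mem_range, Nat.lt_succ_iff, Nat.le_floor_iff (by positivity), le_div_iff₀ hh,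
      sub_nonneg]
  have floor_le : ⌊x / h⌋₊ ≤ N := Nat.floor_le_of_le ((div_le_iff₀ hh).mpr hN)
  have vanish : ∀ i ∈ Finset.range (N + 1), i ∉ Finset.range (⌊x / h⌋₊ + 1) →
      c i * truncDividedPow n (x - i * h) = 0 := fun i _ hi => by
    rw [truncDividedPow_of_neg (not_le.mp (mt (mem_iff i).mpr hi)), mul_zero]
  rw [← Finset.sum_subset (Finset.range_mono (Nat.succ_le_succ floor_le)) vanish, Finset.sum_div]
  refine Finset.sum_congr rfl fun i hi => ?_
  rw [truncDividedPow_of_nonneg ((mem_iff i).mp hi), mul_div_assoc]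

end TruncDividedPow

section UniformDensity

/-- The density of the uniform distribution on `[a, b]`, as a real-valued function. -/
noncomputable def uniformDensity (a b : ℝ) : ℝ → ℝ :=
  fun y => if a ≤ y ∧ y ≤ b then 1 / (b - a) else 0

variable {a b u : ℝ}

lemma support_uniformDensity_subset (a b : ℝ) : (uniformDensity a b).support ⊆ Set.Icc a b :=
  fun _ hy => by_contra fun h => hy (if_neg h)

lemma conv_uniformDensity (hab : a ≤ b) (g : ℝ → ℝ) (u : ℝ) :
    conv g (uniformDensity a b) u = (∫ x in (u - b)..(u - a), g x) / (b - a) := by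
  have integrand_eq : (fun y => g (u - y) * uniformDensity a b y) =
      (Set.Icc a b).indicator fun y => g (u - y) / (b - a) := by
    ext y
    simp [uniformDensity, Set.indicator_apply, div_eq_mul_inv]
  rw [conv, integrand_eq, integral_indicator measurableSet_Icc, integral_Icc_eq_integral_Ioc,
    ← intervalIntegral.integral_of_le hab, intervalIntegral.integral_div,
    intervalIntegral.integral_comp_sub_left]

lemma uniformDensity_eq_fwdDiff (hab : a ≤ b) (hu : u ≠ b) :
    uniformDensity a b u = Δ_[b - a] (truncDividedPow 0) (u - b) / (b - a) := by
  have : u - b + (b - a) = u - a := by ring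
  rw [fwdDiff, this]
  rcases hu.lt_or_gt with hub | hbu
  · rw [truncDividedPow_of_neg (sub_neg.mpr hub)]
    simp [uniformDensity, truncDividedPow, hub.le, ite_div]
  · rw [truncDividedPow_of_nonneg (sub_nonneg.mpr hbu.le),
      truncDividedPow_of_nonneg (sub_nonneg.mpr (hab.trans hbu.le))]
    simp [uniformDensity, hbu.not_ge]

lemma convPow_uniformDensity_eq_fwdDiff_iter (hab : a ≤ b) (n : ℕ) (hu : n = 0 → u ≠ b) :
    convPow (uniformDensity a b) (n + 1) u =
      Δ_[b - a] ^[n + 1] (truncDividedPow n) (u - (n + 1 : ℕ) * b) / (b - a) ^ (n + 1) := by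
  induction n generalizing u with
  | zero => simpa [convPow] using uniformDensity_eq_fwdDiff hab (hu rfl)
  | succ n ih =>
    set h := b - a with h_def
    have ih_ae : ∀ᵐ x, convPow (uniformDensity a b) (n + 1) x =
        Δ_[h] ^[n + 1] (truncDividedPow n) (x - (n + 1 : ℕ) * b) / h ^ (n + 1) := by
      filter_upwards [Measure.ae_ne volume b] with x hx using ih fun _ => hx
    calc convPow (uniformDensity a b) (n + 2) u
        = (∫ x in (u - b)..(u - a), convPow (uniformDensity a b) (n + 1) x) / h :=
          conv_uniformDensity hab _ u
      _ = (∫ x in (u - b)..(u - a),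
            Δ_[h] ^[n + 1] (truncDividedPow n) (x - (n + 1 : ℕ) * b) / h ^ (n + 1)) / h := by
          rw [intervalIntegral.integral_congr_ae (ih_ae.mono fun x hx _ => hx)]
      _ = (Δ_[h] ^[n + 1] (truncDividedPow (n + 1)) (u - a - (n + 1 : ℕ) * b) -
            Δ_[h] ^[n + 1] (truncDividedPow (n + 1)) (u - b - (n + 1 : ℕ) * b)) /
              h ^ (n + 1) / h := by
          rw [intervalIntegral.integral_div, intervalIntegral.integral_comp_sub_right,
            integral_fwdDiff_iter (intervalIntegrable_truncDividedPow n)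
              (integral_truncDividedPow n)]
      _ = Δ_[h] ^[n + 2] (truncDividedPow (n + 1)) (u - (n + 2 : ℕ) * b) / h ^ (n + 2) := by
          rw [div_div, ← pow_succ, Function.iterate_succ_apply' _ (n + 1), fwdDiff]
          congr 3 <;> simp only [h_def] <;> push_cast <;> ring_nf

lemma convPow_uniformDensity_eq_sum (hab : a ≤ b) {n : ℕ} (hn : 1 ≤ n) (hu : n = 1 → u ≠ b) :
    convPow (uniformDensity a b) n u =
      (∑ i ∈ Finset.range (n + 1), (-1) ^ i * (n.choose i : ℝ) *
        truncDividedPow (n - 1) (u - n * a - i * (b - a))) / (b - a) ^ n := by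
  obtain ⟨m, rfl⟩ := Nat.exists_eq_add_of_le' hn
  have shift : u - (m + 1 : ℕ) * b = u - (m + 1 : ℕ) * a - (m + 1) • (b - a) := by
    rw [nsmul_eq_mul]
    ring
  rw [convPow_uniformDensity_eq_fwdDiff_iter hab m (by simpa using hu), shift,
    fwdDiff_iter_sub_nsmul]
  simp

end UniformDensity

theorem uniform_convPow_general {a b : ℝ} (hab : a < b) {n : ℕ} (hn : 1 ≤ n) {u : ℝ}
    (hu : n = 1 → u ≠ b) :
    convPow (uniformDensity a b) n u =
      if (n : ℝ) * a ≤ u ∧ u ≤ (n : ℝ) * b then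
        (∑ i ∈ Finset.range (⌊(u - n * a) / (b - a)⌋.toNat + 1),
            (-1 : ℝ) ^ i * (n.choose i : ℝ) * (u - n * a - i * (b - a)) ^ (n - 1))
          / ((n - 1).factorial * (b - a) ^ n)
      else 0 := by
  split_ifs with h_mem
  · have lower : 0 ≤ u - n * a := sub_nonneg.mpr h_mem.1
    have upper : u - n * a ≤ n * (b - a) := by linarith [h_mem.2]
    rw [convPow_uniformDensity_eq_sum hab.le hn hu,
      sum_truncDividedPow_eq_sum_range_floor _ _ (sub_pos.mpr hab) lower upper, div_div,
      Int.floor_toNat]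
  · by_contra h_ne
    exact h_mem (support_convPow_subset_Icc (support_uniformDensity_subset a b) hn h_ne)

/-- Closed form of the n-fold convolution of the uniform density on [a,b]
(density of the sum of n i.i.d. uniform random variables). -/
theorem uniform_convPow (a b : ℝ) (hab : a < b) (n : ℕ) (hn : 1 ≤ n) :
    ∀ᵐ u : ℝ ∂volume,
      convPow (fun y => if a ≤ y ∧ y ≤ b then 1 / (b - a) else 0) n u =
        if (n : ℝ) * a ≤ u ∧ u ≤ (n : ℝ) * b then
          (∑ i ∈ Finset.range ((⌊(u - n * a) / (b - a)⌋).toNat + 1),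
              (-1 : ℝ) ^ i * (n.choose i : ℝ)
                * (u - n * a - i * (b - a)) ^ (n - 1))
            / ((n - 1).factorial * (b - a) ^ n)
        else 0 := by
  filter_upwards [Measure.ae_ne volume b] with u hu
  exact uniform_convPow_general hab hn fun _ => hu
end
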